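/- Let q be a complex number with 0 < |q| < 1, and define f^2_{m,l}(q) := q^{(m−l)^2} (q;q)_l / ((q;q)_{m−l} (q;q)_{2l−m}) for integers m, l, with the convention 1/(q;q)_a := 0 whenever a < 0 (so in particular f^2_{m,l}(q) = 0 unless l ≤ m ≤ 2l). Then for all integers m, l with l < m < 2l, the recursion f^2_{m,l}(q) = q^l · f^2_{m−1,l}(q) + f^2_{m−1,l−1}(q) − q^{2m−l−3} · f^2_{m−3,l−1}(q) holds. -/

import Mathlib

/-!
With `a = m - l` and `b = 2 l - m`, so that `l = a + b`, the four terms are multiples of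
`q ^ a² (q;q)_{a+b-1} / ((q;q)_a (q;q)_{b+1})`. This follows from the recursion
`1/(q;q)_{n-1} = (1 - q^n) / (q;q)_n`, which under the convention `1/(q;q)_n = 0` for `n < 0`
holds for every integer `n` (`qFactInv_sub_one`), so boundary terms need no special treatment.
Writing `A = q^a`, `B = q^b`, what remains is the identity
`(1 - AB)(1 - qB) = (qB/A)(1 - AB)(1 - A) + (1 - B)(1 - qB) - (qB/A)(1 - A)(1 - A/q)`.
-/

open Finset

/-- Finite q-Pochhammer symbol `(a;q)_n`. -/
noncomputable def qPoch (a q : ℂ) (n : ℕ) : ℂ := ∏ j ∈ Finset.range n, (1 - a * q ^ j)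

/-- `1/(q;q)_a` with the convention that it is `0` for `a < 0`. -/
noncomputable def qFactInv (q : ℂ) (a : ℤ) : ℂ :=
  if 0 ≤ a then (qPoch q q a.toNat)⁻¹ else 0

/-- `f²_{m,l}(q) := q^{(m−l)²} (q;q)_l / ((q;q)_{m−l} (q;q)_{2l−m})`, with the convention
    `1/(q;q)_a = 0` for `a < 0` (so it vanishes unless `l ≤ m ≤ 2l`). -/
noncomputable def f2 (q : ℂ) (m l : ℤ) : ℂ :=
  q ^ ((m - l) ^ 2) * qPoch q q l.toNat * qFactInv q (m - l) * qFactInv q (2 * l - m)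

theorem qPoch_ne_zero {q : ℂ} (hq1 : ‖q‖ < 1) (n : ℕ) : qPoch q q n ≠ 0 := by
  unfold qPoch
  refine Finset.prod_ne_zero_iff.mpr fun j _ h => ?_
  have h1 : q ^ (j + 1) = 1 := by rw [pow_succ']; exact (sub_eq_zero.mp h).symm
  have h2 : ‖q‖ ^ (j + 1) < 1 := pow_lt_one₀ (norm_nonneg q) hq1 (Nat.succ_ne_zero j)
  rw [← norm_pow, h1, norm_one] at h2
  exact lt_irrefl _ h2

theorem qPoch_succ (q : ℂ) (n : ℕ) : qPoch q q (n + 1) = qPoch q q n * (1 - q ^ (n + 1)) := by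
  unfold qPoch
  rw [Finset.prod_range_succ, pow_succ']

/-- The recursion is valid for all integers: at `n = 0` the factor `1 - q ^ n` vanishes,
matching `1/(q;q)_{-1} = 0`, and for `n < 0` both sides are zero. -/
theorem qFactInv_sub_one {q : ℂ} (hq1 : ‖q‖ < 1) (n : ℤ) :
    qFactInv q (n - 1) = (1 - q ^ n) * qFactInv q n := by
  rcases lt_trichotomy n 0 with h | h | h
  · simp [qFactInv, not_le.mpr h, show ¬ (1 ≤ n) by omega]
  · subst h
    simp [qFactInv]
  · obtain ⟨k, rfl⟩ : ∃ k : ℕ, n = (k + 1 : ℕ) := ⟨(n - 1).toNat, by omega⟩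
    have e : ((k + 1 : ℕ) : ℤ) - 1 = (k : ℤ) := by push_cast; ring
    have h1 := qPoch_ne_zero hq1 (k + 1)
    rw [e, zpow_natCast]
    simp only [qFactInv, Int.natCast_nonneg, if_true, Int.toNat_natCast]
    rw [qPoch_succ] at h1 ⊢
    have h2 := left_ne_zero_of_mul h1
    have h3 := right_ne_zero_of_mul h1
    field_simp

/-- For `l < m < 2l`, the recursion
    `f²_{m,l} = q^l f²_{m−1,l} + f²_{m−1,l−1} − q^{2m−l−3} f²_{m−3,l−1}` holds. -/
theorem statement14 (q : ℂ) (hq0 : 0 < ‖q‖) (hq1 : ‖q‖ < 1) :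
    ∀ m l : ℤ, l < m → m < 2 * l →
      f2 q m l
        = q ^ l * f2 q (m - 1) l + f2 q (m - 1) (l - 1)
          - q ^ (2 * m - l - 3) * f2 q (m - 3) (l - 1) := by
  intro m l hlm hml
  have hq : q ≠ 0 := norm_pos_iff.mp hq0
  obtain ⟨a, rfl⟩ : ∃ a, m = l + a := ⟨m - l, by ring⟩
  obtain ⟨b, rfl⟩ : ∃ b, l = a + b := ⟨l - a, by ring⟩
  have hP : qPoch q q (a + b).toNat = qPoch q q (a + b - 1).toNat * (1 - q ^ a * q ^ b) := by
    rw [show (a + b).toNat = (a + b - 1).toNat + 1 by omega, qPoch_succ, ← zpow_natCast,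
      show (((a + b - 1).toNat + 1 : ℕ) : ℤ) = a + b by omega, zpow_add₀ hq]
  have ha1 := qFactInv_sub_one hq1 a
  have ha2 : qFactInv q (a - 2) = (1 - q ^ a / q) * ((1 - q ^ a) * qFactInv q a) := by
    rw [← ha1, ← zpow_sub_one₀ hq a |>.trans (div_eq_mul_inv _ _).symm, ← qFactInv_sub_one hq1]
    congr 1; ring
  have hb0 : qFactInv q b = (1 - q ^ b * q) * qFactInv q (b + 1) := by
    rw [← zpow_add_one₀ hq, ← qFactInv_sub_one hq1]
    congr 1; ring
  have hb1 := qFactInv_sub_one hq1 b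
  have hA : q ^ a ≠ 0 := zpow_ne_zero a hq
  -- The powers of `q` in the second and fourth terms, relative to `q ^ a²`.
  have e1 : q ^ (a + b) * q ^ ((a - 1) ^ 2) = q ^ (a ^ 2) * (q ^ b * q / q ^ a) := by
    rw [eq_comm, ← zpow_add_one₀ hq, ← zpow_sub₀ hq, ← zpow_add₀ hq, ← zpow_add₀ hq]
    congr 1; ring
  have e2 : q ^ (3 * a + b - 3) * q ^ ((a - 2) ^ 2) = q ^ (a ^ 2) * (q ^ b * q / q ^ a) := by
    rw [eq_comm, ← zpow_add_one₀ hq, ← zpow_sub₀ hq, ← zpow_add₀ hq, ← zpow_add₀ hq]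
    congr 1; ring
  unfold f2
  rw [show a + b + a - (a + b) = a by ring, show 2 * (a + b) - (a + b + a) = b by ring,
    show a + b + a - 1 - (a + b) = a - 1 by ring,
    show 2 * (a + b) - (a + b + a - 1) = b + 1 by ring,
    show a + b + a - 1 - (a + b - 1) = a by ring,
    show 2 * (a + b - 1) - (a + b + a - 1) = b - 1 by ring,
    show a + b + a - 3 - (a + b - 1) = a - 2 by ring,
    show 2 * (a + b - 1) - (a + b + a - 3) = b + 1 by ring,
    show 2 * (a + b + a) - (a + b) - 3 = 3 * a + b - 3 by ring]
  simp only [← mul_assoc]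
  rw [e1, e2, hP, ha1, ha2, hb1, hb0]
  field_simp
  ring
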